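/- For every smooth function φ on U one has ∇^{II}(φ, x) + ∇^{III}(φ, n) = 0, i.e. b^{ij} φ_{/i} x_{/j} + e^{ij} φ_{/i} n_{/j} = 0 as an ℝ³-valued identity on U. -/

import Mathlib

open Matrix

noncomputable section

/-- The parameter domain `ℝ²`. -/
abbrev Param : Type := Fin 2 → ℝ

/-- Vectors in Euclidean 3-space. -/
abbrev Vec3 : Type := Fin 3 → ℝ

/-- Partial derivative of a vector-valued function in the `i`-th coordinate direction. -/
noncomputable def pd (i : Fin 2) (f : Param → Vec3) (u : Param) : Vec3 :=
  fderiv ℝ f u (Pi.single i 1)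

/-- Partial derivative of a scalar function in the `i`-th coordinate direction. -/
noncomputable def pds (i : Fin 2) (f : Param → ℝ) (u : Param) : ℝ :=
  fderiv ℝ f u (Pi.single i 1)

/-- The Euclidean inner product on `ℝ³`. -/
def dot3 (a b : Vec3) : ℝ := ∑ k, a k * b k

/-- The Euclidean norm on `ℝ³`. -/
noncomputable def norm3 (a : Vec3) : ℝ := Real.sqrt (dot3 a a)

/-- The Gauss map `n = (x_{/1} × x_{/2}) / ‖x_{/1} × x_{/2}‖`. -/
noncomputable def gaussMap (x : Param → Vec3) (u : Param) : Vec3 :=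
  (norm3 (crossProduct (pd 0 x u) (pd 1 x u)))⁻¹ • crossProduct (pd 0 x u) (pd 1 x u)

/-- Components `g_{ij}` of the first fundamental form. -/
noncomputable def fformI (x : Param → Vec3) (u : Param) : Matrix (Fin 2) (Fin 2) ℝ :=
  Matrix.of fun i j => dot3 (pd i x u) (pd j x u)

/-- Components `b_{ij} = ⟨∂²x/∂u^i∂u^j, n⟩` of the second fundamental form. -/
noncomputable def fformII (x : Param → Vec3) (u : Param) : Matrix (Fin 2) (Fin 2) ℝ :=
  Matrix.of fun i j => dot3 (pd i (pd j x) u) (gaussMap x u)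

/-- Components `e_{ij} = ⟨n_{/i}, n_{/j}⟩` of the third fundamental form. -/
noncomputable def fformIII (x : Param → Vec3) (u : Param) : Matrix (Fin 2) (Fin 2) ℝ :=
  Matrix.of fun i j => dot3 (pd i (gaussMap x) u) (pd j (gaussMap x) u)

/-- The Gauss curvature `K = det(b_{ij}) / det(g_{ij})`. -/
noncomputable def gaussCurv (x : Param → Vec3) (u : Param) : ℝ :=
  (fformII x u).det / (fformI x u).det

/-- The mean curvature `H = (1/2) g^{ij} b_{ij}`. -/
noncomputable def meanCurv (x : Param → Vec3) (u : Param) : ℝ :=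
  (1 / 2) * ∑ i, ∑ j, (fformI x u)⁻¹ i j * fformII x u i j

/-- First Beltrami operator `∇^J(φ, ψ) = a^{ij} φ_{/i} ψ_{/j}` with respect to the
fundamental form with component matrix `a`, for scalar `φ` and `ℝ³`-valued `ψ`. -/
noncomputable def beltrami1 (a : Param → Matrix (Fin 2) (Fin 2) ℝ)
    (φ : Param → ℝ) (ψ : Param → Vec3) (u : Param) : Vec3 :=
  ∑ i, ∑ j, ((a u)⁻¹ i j * pds i φ u) • pd j ψ u

/-- Second Beltrami operator
`Δ^J f = −(1/√|det a|) ∂_i (√|det a| a^{ij} ∂_j f)` with respect to the fundamental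
form with component matrix `a`, acting componentwise on `ℝ³`-valued functions. -/
noncomputable def beltrami2 (a : Param → Matrix (Fin 2) (Fin 2) ℝ)
    (f : Param → Vec3) (u : Param) : Vec3 :=
  -((Real.sqrt |(a u).det|)⁻¹ •
    ∑ i, ∑ j, pd i (fun v => (Real.sqrt |(a v).det| * (a v)⁻¹ i j) • pd j f v) u)

/-- `x` is an immersion on `U`: the partial derivatives are linearly independent. -/
def Immersed (x : Param → Vec3) (U : Set Param) : Prop :=
  ∀ u ∈ U, LinearIndependent ℝ ![pd 0 x u, pd 1 x u]

/-- `f` is nonconstant on `U`. -/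
def NonconstOn (f : Param → Vec3) (U : Set Param) : Prop :=
  ¬ ∃ v : Vec3, ∀ u ∈ U, f u = v

/-!
Write `X`, `N` for the `2 × 3` matrices with rows `x_{/i}`, `n_{/i}`, and `G`, `B`, `E` for the
three fundamental forms, so that `G = X Xᵀ` and `E = N Nᵀ`. Differentiating `⟨x_{/j}, n⟩ = 0` gives
`N Xᵀ = -B`, and differentiating `⟨n, n⟩ = 1` shows that the rows of `N` are tangent to the surface;
together these are the Weingarten equations `N = -B G⁻¹ X`. Hence `E = B G⁻¹ B`, and therefore
`E⁻¹ N = -(B⁻¹ G B⁻¹) (B G⁻¹ X) = -B⁻¹ X`. Contracting with the gradient of `φ` is the claim.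
-/

section CrossProduct

variable {R : Type*} [CommRing R]

lemma det_dotProduct_self_eq_cross_dotProduct_cross (v : Fin 2 → Fin 3 → R) :
    (Matrix.of fun i j => v i ⬝ᵥ v j).det =
      crossProduct (v 0) (v 1) ⬝ᵥ crossProduct (v 0) (v 1) := by
  rw [det_fin_two, cross_dot_cross]
  rfl

lemma eq_zero_of_dotProduct_eq_zero_of_cross_ne_zero [LinearOrder R] [IsStrictOrderedRing R]
    {a b v : Fin 3 → R} (hab : crossProduct a b ≠ 0) (ha : v ⬝ᵥ a = 0) (hb : v ⬝ᵥ b = 0)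
    (hcross : v ⬝ᵥ crossProduct a b = 0) : v = 0 := by
  have hparallel : crossProduct v (crossProduct a b) = 0 := by
    rw [cross_cross_eq_smul_sub_smul', hb, dotProduct_comm a v, ha, zero_smul, zero_smul, sub_zero]
  have hlagrange := cross_dot_cross v (crossProduct a b) v (crossProduct a b)
  rw [hparallel, zero_dotProduct, hcross, zero_mul, sub_zero, eq_comm, mul_eq_zero] at hlagrange
  exact dotProduct_self_eq_zero.1
    (hlagrange.resolve_right fun h => hab (dotProduct_self_eq_zero.1 h))

end CrossProduct

section Calculus

variable {𝕜 : Type*} [NontriviallyNormedField 𝕜]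
  {E : Type*} [NormedAddCommGroup E] [NormedSpace 𝕜 E]

lemma differentiableAt_fderiv_of_contDiffAt_two {F : Type*} [NormedAddCommGroup F]
    [NormedSpace 𝕜 F] {f : E → F} {u : E} (hf : ContDiffAt 𝕜 2 f u) :
    DifferentiableAt 𝕜 (fderiv 𝕜 f) u :=
  (hf.fderiv_right (m := 1) le_rfl).differentiableAt one_ne_zero

variable [CompleteSpace 𝕜]

section DotProduct

variable {ι : Type*} [Fintype ι] {f g : E → ι → 𝕜} {u : E}

lemma differentiableAt_dotProduct (hf : DifferentiableAt 𝕜 f u) (hg : DifferentiableAt 𝕜 g u) :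
    DifferentiableAt 𝕜 (fun v => f v ⬝ᵥ g v) u :=
  ((dotProductBilin 𝕜 𝕜 (A := 𝕜)).toContinuousBilinearMap.hasFDerivAt_of_bilinear
    hf.hasFDerivAt hg.hasFDerivAt).differentiableAt

lemma fderiv_dotProduct_apply (hf : DifferentiableAt 𝕜 f u) (hg : DifferentiableAt 𝕜 g u)
    (e : E) :
    fderiv 𝕜 (fun v => f v ⬝ᵥ g v) u e = f u ⬝ᵥ fderiv 𝕜 g u e + fderiv 𝕜 f u e ⬝ᵥ g u :=
  congrArg (· e) ((dotProductBilin 𝕜 𝕜).toContinuousBilinearMap.fderiv_of_bilinear hf hg)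

lemma dotProduct_fderiv_add_eq_zero_of_eventually_const (hf : DifferentiableAt 𝕜 f u)
    (hg : DifferentiableAt 𝕜 g u) {c : 𝕜} (hfg : ∀ᶠ v in nhds u, f v ⬝ᵥ g v = c) (e : E) :
    f u ⬝ᵥ fderiv 𝕜 g u e + fderiv 𝕜 f u e ⬝ᵥ g u = 0 := by
  have hconst : (fun v => f v ⬝ᵥ g v) =ᶠ[nhds u] fun _ => c := hfg
  rw [← fderiv_dotProduct_apply hf hg, hconst.fderiv_eq, fderiv_fun_const]
  rfl

end DotProduct

lemma differentiableAt_crossProduct {f g : E → Fin 3 → 𝕜} {u : E} (hf : DifferentiableAt 𝕜 f u)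
    (hg : DifferentiableAt 𝕜 g u) :
    DifferentiableAt 𝕜 (fun v => crossProduct (f v) (g v)) u :=
  ((crossProduct (R := 𝕜)).toContinuousBilinearMap.hasFDerivAt_of_bilinear
    hf.hasFDerivAt hg.hasFDerivAt).differentiableAt

end Calculus

lemma norm3_sq (a : Vec3) : norm3 a ^ 2 = a ⬝ᵥ a :=
  Real.sq_sqrt (Finset.sum_nonneg fun k _ => mul_self_nonneg (a k))

lemma norm3_ne_zero {a : Vec3} (ha : a ≠ 0) : norm3 a ≠ 0 := by
  rw [← pow_ne_zero_iff two_ne_zero, norm3_sq]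
  exact mt dotProduct_self_eq_zero.1 ha

lemma differentiableAt_norm3 {E : Type*} [NormedAddCommGroup E] [NormedSpace ℝ E] {f : E → Vec3}
    {u : E} (hf : DifferentiableAt ℝ f u) (hfu : f u ≠ 0) :
    DifferentiableAt ℝ (fun v => norm3 (f v)) u :=
  (differentiableAt_dotProduct hf hf).sqrt (mt dotProduct_self_eq_zero.1 hfu)

/-- The Jacobian matrix of `ψ` at `u`, transposed: its `i`-th row is the partial derivative
`ψ_{/i}`, so that inverse fundamental forms act on it from the left. -/
def partialsMatrix (ψ : Param → Vec3) (u : Param) : Matrix (Fin 2) (Fin 3) ℝ :=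
  Matrix.of fun i => pd i ψ u

lemma fformI_eq_partialsMatrix_mul_transpose (x : Param → Vec3) (u : Param) :
    fformI x u = partialsMatrix x u * (partialsMatrix x u)ᵀ :=
  rfl

lemma fformIII_eq_partialsMatrix_mul_transpose (x : Param → Vec3) (u : Param) :
    fformIII x u = partialsMatrix (gaussMap x) u * (partialsMatrix (gaussMap x) u)ᵀ :=
  rfl

lemma beltrami1_eq_vecMul (a : Param → Matrix (Fin 2) (Fin 2) ℝ) (φ : Param → ℝ)
    (ψ : Param → Vec3) (u : Param) :
    beltrami1 a φ ψ u = (fun i => pds i φ u) ᵥ* ((a u)⁻¹ * partialsMatrix ψ u) := by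
  simp_rw [← vecMul_vecMul, vecMul_eq_sum (v := _ ᵥ* _), vecMul, dotProduct, Finset.sum_smul]
  rw [Finset.sum_comm]
  simp_rw [beltrami1, mul_comm]
  rfl

lemma pd_dotProduct_gaussMap (x : Param → Vec3) (j : Fin 2) (u : Param) :
    pd j x u ⬝ᵥ gaussMap x u = 0 := by
  rw [gaussMap, dotProduct_smul, smul_eq_zero]
  right
  fin_cases j
  · exact dot_self_cross _ _
  · exact dot_cross_self _ _

section Immersion

variable {x : Param → Vec3} {u : Param}

lemma gaussMap_dotProduct_self (h : crossProduct (pd 0 x u) (pd 1 x u) ≠ 0) :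
    gaussMap x u ⬝ᵥ gaussMap x u = 1 := by
  have hnorm := norm3_ne_zero h
  rw [gaussMap, smul_dotProduct, dotProduct_smul, ← norm3_sq, smul_eq_mul, smul_eq_mul]
  field_simp

lemma isUnit_det_fformI (h : crossProduct (pd 0 x u) (pd 1 x u) ≠ 0) :
    IsUnit (fformI x u).det := by
  have hdet := det_dotProduct_self_eq_cross_dotProduct_cross fun i => pd i x u
  exact isUnit_iff_ne_zero.2 (hdet.trans_ne (mt dotProduct_self_eq_zero.1 h))

lemma differentiableAt_pd (hx : ContDiffAt ℝ 2 x u) (i : Fin 2) :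
    DifferentiableAt ℝ (pd i x) u :=
  (differentiableAt_fderiv_of_contDiffAt_two hx).clm_apply (differentiableAt_const _)

lemma pd_pd_eq_fderiv_fderiv (hx : ContDiffAt ℝ 2 x u) (i j : Fin 2) :
    pd i (pd j x) u = fderiv ℝ (fderiv ℝ x) u (Pi.single i 1) (Pi.single j 1) := by
  have hpd : pd j x = fun v => fderiv ℝ x v (Pi.single j 1) := rfl
  rw [pd, hpd, fderiv_clm_apply (differentiableAt_fderiv_of_contDiffAt_two hx)
    (differentiableAt_const _)]
  simp

lemma fformII_isSymm (hx : ContDiffAt ℝ 2 x u) : (fformII x u).IsSymm := by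
  have hsymm : IsSymmSndFDerivAt ℝ x u := hx.isSymmSndFDerivAt (by simp)
  refine IsSymm.ext fun i j => ?_
  simp only [fformII, of_apply, pd_pd_eq_fderiv_fderiv hx, hsymm.eq (Pi.single i 1)]

lemma differentiableAt_cross_pd (hx : ContDiffAt ℝ 2 x u) :
    DifferentiableAt ℝ (fun v => crossProduct (pd 0 x v) (pd 1 x v)) u :=
  differentiableAt_crossProduct (differentiableAt_pd hx 0) (differentiableAt_pd hx 1)

lemma differentiableAt_gaussMap (hx : ContDiffAt ℝ 2 x u)
    (h : crossProduct (pd 0 x u) (pd 1 x u) ≠ 0) : DifferentiableAt ℝ (gaussMap x) u :=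
  have hcross := differentiableAt_cross_pd hx
  ((differentiableAt_norm3 hcross h).inv (norm3_ne_zero h)).smul hcross

lemma pd_gaussMap_dotProduct_gaussMap (hx : ContDiffAt ℝ 2 x u)
    (h : crossProduct (pd 0 x u) (pd 1 x u) ≠ 0) (i : Fin 2) :
    pd i (gaussMap x) u ⬝ᵥ gaussMap x u = 0 := by
  have hn := differentiableAt_gaussMap hx h
  have hunit : ∀ᶠ v in nhds u, gaussMap x v ⬝ᵥ gaussMap x v = 1 :=
    ((differentiableAt_cross_pd hx).continuousAt.eventually_ne h).mono
      fun _ => gaussMap_dotProduct_self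
  have hderiv := dotProduct_fderiv_add_eq_zero_of_eventually_const hn hn hunit (Pi.single i 1)
  rw [dotProduct_comm] at hderiv
  exact self_eq_neg.1 (eq_neg_of_add_eq_zero_left hderiv)

lemma partialsMatrix_gaussMap_mul_transpose (hx : ContDiffAt ℝ 2 x u)
    (h : crossProduct (pd 0 x u) (pd 1 x u) ≠ 0) :
    partialsMatrix (gaussMap x) u * (partialsMatrix x u)ᵀ = -fformII x u := by
  ext i j
  have hderiv := dotProduct_fderiv_add_eq_zero_of_eventually_const (differentiableAt_pd hx j)
    (differentiableAt_gaussMap hx h) (.of_forall (pd_dotProduct_gaussMap x j)) (Pi.single i 1)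
  rw [dotProduct_comm] at hderiv
  exact eq_neg_of_add_eq_zero_left hderiv

theorem weingarten_equations (hx : ContDiffAt ℝ 2 x u)
    (h : crossProduct (pd 0 x u) (pd 1 x u) ≠ 0) :
    partialsMatrix (gaussMap x) u = -(fformII x u * (fformI x u)⁻¹ * partialsMatrix x u) := by
  rw [← add_eq_zero_iff_eq_neg]
  set W := partialsMatrix (gaussMap x) u + fformII x u * (fformI x u)⁻¹ * partialsMatrix x u
    with hW
  have hW_tangent : W * (partialsMatrix x u)ᵀ = 0 := by
    rw [hW, Matrix.add_mul, partialsMatrix_gaussMap_mul_transpose hx h, Matrix.mul_assoc,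
      ← fformI_eq_partialsMatrix_mul_transpose,
      nonsing_inv_mul_cancel_right _ _ (isUnit_det_fformI h), neg_add_cancel]
  have hW_normal : W *ᵥ gaussMap x u = 0 := by
    have hx_normal : partialsMatrix x u *ᵥ gaussMap x u = 0 :=
      funext fun j => pd_dotProduct_gaussMap x j u
    have hn_normal : partialsMatrix (gaussMap x) u *ᵥ gaussMap x u = 0 :=
      funext fun i => pd_gaussMap_dotProduct_gaussMap hx h i
    rw [hW, add_mulVec, ← mulVec_mulVec, hx_normal, hn_normal, mulVec_zero, add_zero]
  have hW_cross : W *ᵥ crossProduct (pd 0 x u) (pd 1 x u) = 0 := by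
    rw [gaussMap, mulVec_smul] at hW_normal
    exact (smul_eq_zero.1 hW_normal).resolve_left (inv_ne_zero (norm3_ne_zero h))
  funext i
  exact eq_zero_of_dotProduct_eq_zero_of_cross_ne_zero h (congrFun₂ hW_tangent i 0)
    (congrFun₂ hW_tangent i 1) (congrFun hW_cross i)

lemma fformIII_eq_fformII_mul_inv_fformI_mul_fformII (hx : ContDiffAt ℝ 2 x u)
    (h : crossProduct (pd 0 x u) (pd 1 x u) ≠ 0) :
    fformIII x u = fformII x u * (fformI x u)⁻¹ * fformII x u := by
  have hXN : partialsMatrix x u * (partialsMatrix (gaussMap x) u)ᵀ = -fformII x u := by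
    rw [← transpose_transpose (partialsMatrix x u), ← transpose_mul,
      partialsMatrix_gaussMap_mul_transpose hx h, transpose_neg, fformII_isSymm hx]
  calc fformIII x u
      = partialsMatrix (gaussMap x) u * (partialsMatrix (gaussMap x) u)ᵀ :=
        fformIII_eq_partialsMatrix_mul_transpose x u
    _ = -(fformII x u * (fformI x u)⁻¹ * partialsMatrix x u) *
          (partialsMatrix (gaussMap x) u)ᵀ := by
        rw [← weingarten_equations hx h]
    _ = fformII x u * (fformI x u)⁻¹ * fformII x u := by
        rw [Matrix.neg_mul, Matrix.mul_assoc, hXN, Matrix.mul_neg, neg_neg]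

lemma inv_fformIII_mul_partialsMatrix_gaussMap (hx : ContDiffAt ℝ 2 x u)
    (h : crossProduct (pd 0 x u) (pd 1 x u) ≠ 0) (hpar : IsUnit (fformII x u).det) :
    (fformIII x u)⁻¹ * partialsMatrix (gaussMap x) u =
      -((fformII x u)⁻¹ * partialsMatrix x u) := by
  have hG := isUnit_det_fformI h
  rw [fformIII_eq_fformII_mul_inv_fformI_mul_fformII hx h, weingarten_equations hx h,
    Matrix.mul_inv_rev, Matrix.mul_inv_rev, nonsing_inv_nonsing_inv _ hG, Matrix.mul_neg]
  simp only [Matrix.mul_assoc, nonsing_inv_mul_cancel_left _ _ hpar,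
    mul_nonsing_inv_cancel_left _ _ hG]

end Immersion

theorem stmt1_general {x : Param → Vec3} {φ : Param → ℝ} {u : Param} (hx : ContDiffAt ℝ 2 x u)
    (himm : LinearIndependent ℝ ![pd 0 x u, pd 1 x u]) (hpar : (fformII x u).det ≠ 0)
    (_hφ : DifferentiableAt ℝ φ u) :
    beltrami1 (fformII x) φ x u + beltrami1 (fformIII x) φ (gaussMap x) u = 0 := by
  have hcross := crossProduct_ne_zero_iff_linearIndependent.2 himm
  rw [beltrami1_eq_vecMul, beltrami1_eq_vecMul,
    inv_fformIII_mul_partialsMatrix_gaussMap hx hcross (isUnit_iff_ne_zero.2 hpar), vecMul_neg,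
    add_neg_cancel]

/-- `∇^{II}(φ, x) + ∇^{III}(φ, n) = 0` on `U`. -/
theorem stmt1 (U : Set Param) (x : Param → Vec3)
    (hU : IsOpen U) (hUconn : IsConnected U)
    (hx : ContDiffOn ℝ (⊤ : ℕ∞) x U) (himm : Immersed x U)
    (hpar : ∀ u ∈ U, (fformII x u).det ≠ 0)
    (φ : Param → ℝ) (hφ : ContDiffOn ℝ (⊤ : ℕ∞) φ U) :
    ∀ u ∈ U,
      beltrami1 (fformII x) φ x u + beltrami1 (fformIII x) φ (gaussMap x) u = 0 := by
  intro u hu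
  have hUu : U ∈ nhds u := hU.mem_nhds hu
  exact stmt1_general ((hx.contDiffAt hUu).of_le (by norm_cast)) (himm u hu)
    (hpar u hu) ((hφ.contDiffAt hUu).differentiableAt (by simp))
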